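/- The power formula for prestressing strand stress (before capping at f_pu), f_ps(ε) = E_ps·ε·[Q + (1 − Q)/(1 + (E_ps·ε/(K·f_py))^N)^{1/N}], satisfies: (i) f_ps is strictly increasing on [0, ∞); and (ii) f_ps(ε) ≤ E_ps·ε for all ε ≥ 0, with equality only at ε = 0. In particular, for (i), its derivative with respect to the normalized variable t = E_ps·ε/(K·f_py) equals K·f_py·[Q + (1 − Q)·(1 + t^N)^{−(1 + 1/N)}] > 0 for all t ≥ 0. -/

import Mathlib

/-- The Mattock power formula for prestressing strand stress (before
capping at `f_pu`) is strictly increasing on `[0, ∞)`, is bounded above by `E_ps·ε`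
with equality only at `ε = 0`, and in the normalized variable `t = E_ps·ε/(K·f_py)`
has derivative `K·f_py·(Q + (1 − Q)·(1 + t^N)^{−(1 + 1/N)}) > 0` for all `t ≥ 0`. -/
theorem mattock_strand_model_properties
    (Eps fpy K Q N : ℝ)
    (hEps : 0 < Eps) (hfpy : 0 < fpy) (hK : 0 < K)
    (hQ0 : 0 < Q) (hQ1 : Q < 1) (hN : 0 < N) :
    let fps : ℝ → ℝ := fun ε =>
      Eps * ε * (Q + (1 - Q) / (1 + (Eps * ε / (K * fpy)) ^ N) ^ (1 / N))
    let F : ℝ → ℝ := fun t =>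
      K * fpy * t * (Q + (1 - Q) / (1 + t ^ N) ^ (1 / N))
    StrictMonoOn fps (Set.Ici 0) ∧
      (∀ ε : ℝ, 0 ≤ ε → fps ε ≤ Eps * ε) ∧
      (∀ ε : ℝ, 0 ≤ ε → fps ε = Eps * ε → ε = 0) ∧
      (∀ t : ℝ, 0 ≤ t →
        HasDerivAt F (K * fpy * (Q + (1 - Q) * (1 + t ^ N) ^ (-(1 + 1 / N)))) t ∧
          0 < K * fpy * (Q + (1 - Q) * (1 + t ^ N) ^ (-(1 + 1 / N)))) := by
  intro fps F
  have hc : 0 < K * fpy := mul_pos hK hfpy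
  have hA : ∀ t : ℝ, 0 ≤ t → 0 < 1 + t ^ N := fun t ht => by
    have := Real.rpow_nonneg ht N
    linarith
  have hpos : ∀ t : ℝ, 0 ≤ t →
      0 < K * fpy * (Q + (1 - Q) * (1 + t ^ N) ^ (-(1 + 1 / N))) := fun t ht => by
    have h1 := Real.rpow_pos_of_pos (hA t ht) (-(1 + 1 / N))
    have h2 : 0 < 1 - Q := by linarith
    positivity
  have hder : ∀ t : ℝ, 0 ≤ t →
      HasDerivAt F (K * fpy * (Q + (1 - Q) * (1 + t ^ N) ^ (-(1 + 1 / N)))) t := by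
    intro t ht
    rcases ht.eq_or_lt with h0 | h0
    · subst h0
      have hcont : ContinuousAt
          (fun t : ℝ => K * fpy * (Q + (1 - Q) / (1 + t ^ N) ^ (1 / N))) 0 := by
        have c1 : ContinuousAt (fun t : ℝ => 1 + t ^ N) 0 :=
          continuousAt_const.add (Real.continuousAt_rpow_const 0 N (Or.inr hN.le))
        have c2 : ContinuousAt (fun t : ℝ => (1 + t ^ N) ^ (1 / N)) 0 :=
          c1.rpow_const (Or.inr (by positivity))
        refine continuousAt_const.mul (continuousAt_const.add (continuousAt_const.div c2 ?_))
        exact (Real.rpow_pos_of_pos (hA 0 le_rfl) _).ne'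
      rw [hasDerivAt_iff_tendsto_slope]
      have h2 := hcont.tendsto.mono_left (nhdsWithin_le_nhds (s := {0}ᶜ))
      have e : K * fpy * (Q + (1 - Q) * (1 + (0:ℝ) ^ N) ^ (-(1 + 1 / N)))
          = K * fpy * (Q + (1 - Q) / (1 + (0:ℝ) ^ N) ^ (1 / N)) := by
        simp [Real.zero_rpow hN.ne']
      rw [e]
      refine h2.congr' ?_
      filter_upwards [self_mem_nhdsWithin] with x hx
      have hx0 : x ≠ 0 := hx
      simp only [slope_def_field, F]
      field_simp
      ring
    · have hAt := hA t ht
      have hB : 0 < (1 + t ^ N) ^ (1 / N) := Real.rpow_pos_of_pos hAt _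
      have d1 : HasDerivAt (fun t : ℝ => 1 + t ^ N) (N * t ^ (N - 1)) t :=
        (Real.hasDerivAt_rpow_const (Or.inl h0.ne')).const_add 1
      have d2 := d1.rpow_const (p := 1 / N) (Or.inl hAt.ne')
      have d3 := (((hasDerivAt_const t (1 - Q)).div d2 hB.ne').const_add Q)
      have d4 := ((hasDerivAt_id t).const_mul (K * fpy)).mul d3
      refine d4.congr_deriv ?_
      have e1 : (1 + t ^ N) ^ (1 / N - 1) = (1 + t ^ N) ^ (1 / N) / (1 + t ^ N) :=
        Real.rpow_sub_one hAt.ne' _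
      have e2 : (1 + t ^ N) ^ (-(1 + 1 / N)) = 1 / ((1 + t ^ N) * (1 + t ^ N) ^ (1 / N)) := by
        rw [Real.rpow_neg hAt.le, Real.rpow_add hAt, Real.rpow_one, one_div ((1 + t ^ N) * _)]
      have e3 : t ^ (N - 1) = t ^ N / t := Real.rpow_sub_one h0.ne' _
      simp only [id, Pi.div_apply]
      rw [e1, e2, e3]
      generalize (1 + t ^ N) ^ (1 / N) = B at *
      generalize t ^ N = u at *
      have := hAt.ne'
      have := hB.ne'
      field_simp
      ring
  have hF : StrictMonoOn F (Set.Ici 0) := by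
    refine strictMonoOn_of_deriv_pos (convex_Ici 0)
      (fun t ht => (hder t ht).continuousAt.continuousWithinAt) ?_
    intro t ht
    have ht' : 0 ≤ t := interior_subset ht
    rw [(hder t ht').deriv]
    exact hpos t ht'
  have hfF : ∀ ε, fps ε = F (Eps * ε / (K * fpy)) := by
    intro ε
    simp only [fps, F]
    rw [mul_div_cancel₀ _ hc.ne']
  have hlt : ∀ ε : ℝ, 0 < ε → fps ε < Eps * ε := by
    intro ε hε
    have hu : 0 < (Eps * ε / (K * fpy)) ^ N := Real.rpow_pos_of_pos (by positivity) _
    have hB : 1 < (1 + (Eps * ε / (K * fpy)) ^ N) ^ (1 / N) :=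
      Real.one_lt_rpow (by linarith) (by positivity)
    have hd : (1 - Q) / (1 + (Eps * ε / (K * fpy)) ^ N) ^ (1 / N) < 1 - Q :=
      div_lt_self (by linarith) hB
    have hE : 0 < Eps * ε := by positivity
    simp only [fps]
    exact mul_lt_of_lt_one_right hE (by linarith)
  refine ⟨?_, ?_, ?_, fun t ht => ⟨hder t ht, hpos t ht⟩⟩
  · intro a ha b hb hab
    have ha' : 0 ≤ a := ha
    have hb' : 0 ≤ b := hb
    rw [hfF, hfF]
    refine hF (Set.mem_Ici.2 (by positivity)) (Set.mem_Ici.2 (by positivity)) ?_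
    gcongr
  · intro ε hε
    rcases hε.eq_or_lt with h | h
    · subst h
      simp [fps]
    · exact (hlt ε h).le
  · intro ε hε he
    rcases hε.eq_or_lt with h | h
    · exact h.symm
    · exact absurd he (hlt ε h).ne
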